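/- Let X be a compact metric space, f : X → X a continuous map, and Λ ⊆ X a closed f-invariant subset such that f|_Λ : Λ → Λ is minimal and equicontinuous. Let Γ be a countable dense subset of Λ. Then for every ε > 0, if X = ⋃_{x∈Λ} closure(V_ε^s(x)), then X = ⋃_{x∈Γ} closure(V_{2ε}^s(x)). -/

import Mathlib

/-!
Given `z` in the closure of `V_ε^s(x)` with `x ∈ Λ`, equicontinuity and density of `Γ` provide
`y ∈ Γ` so close to `x` that their forward orbits stay `ε`-close forever. By the triangle
inequality `V_ε^s(x) ⊆ V_{2ε}^s(y)` (`Vs_subset_two_mul`), and taking closures shows that `z` lies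
in the closure of `V_{2ε}^s(y)`.
-/

open Filter Topology

/-- `V_ε^s(x)`: points whose forward orbit eventually stays ε-close (in limsup) to that of `x`. -/
def Vs {X : Type*} [MetricSpace X] (f : X → X) (x : X) (ε : ℝ) : Set X :=
  {y | Filter.limsup (fun i : ℕ => dist (f^[i] x) (f^[i] y)) Filter.atTop ≤ ε}

open Classical in
/-- A DC1-`n`-`δ`-scrambled tuple. -/
def DC1Scrambled {X : Type*} [MetricSpace X] (f : X → X) {n : ℕ} (δ : ℝ)
    (x : Fin n → X) : Prop :=
  Filter.limsup (fun m : ℕ =>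
      ((((Finset.range m).filter fun i => ∀ j k : Fin n, j < k →
        δ < dist (f^[i] (x j)) (f^[i] (x k))).card : ℝ) / m)) Filter.atTop = 1 ∧
  ∀ ε : ℝ, 0 < ε → Filter.limsup (fun m : ℕ =>
      ((((Finset.range m).filter fun i => ∀ j k : Fin n, j < k →
        dist (f^[i] (x j)) (f^[i] (x k)) < ε).card : ℝ) / m)) Filter.atTop = 1

/-- `S` is a distal set for `f`. -/
def DistalSet {X : Type*} [MetricSpace X] (f : X → X) (S : Set X) : Prop :=
  ∀ n : ℕ, 2 ≤ n → ∀ x : Fin n → X, (∀ j, x j ∈ S) → Function.Injective x →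
    ∃ c : ℝ, 0 < c ∧ ∀ i : ℕ, ∀ j k : Fin n, j < k → c ≤ dist (f^[i] (x j)) (f^[i] (x k))

/-- `f` restricted to `Λ` is minimal: `Λ` is the orbit closure of each of its points. -/
def MinimalOn {X : Type*} [TopologicalSpace X] (f : X → X) (Λ : Set X) : Prop :=
  ∀ x ∈ Λ, closure (Set.range fun i : ℕ => f^[i] x) = Λ

/-- `f` restricted to `Λ` is equicontinuous. -/
def EquicontOnSet {X : Type*} [MetricSpace X] (f : X → X) (Λ : Set X) : Prop :=
  ∀ ε : ℝ, 0 < ε → ∃ δ : ℝ, 0 < δ ∧ ∀ x ∈ Λ, ∀ y ∈ Λ, dist x y ≤ δ →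
    ∀ i : ℕ, dist (f^[i] x) (f^[i] y) ≤ ε

/-- Topological transitivity. -/
def IsTransitive {Z : Type*} [TopologicalSpace Z] (h : Z → Z) : Prop :=
  ∀ U V : Set Z, IsOpen U → IsOpen V → U.Nonempty → V.Nonempty →
    ∃ i : ℕ, ∃ z ∈ U, h^[i] z ∈ V

/-- `N(x,ε)` : times at which the orbit of `x` returns ε-close to `x`. -/
def retTimes {X : Type*} [MetricSpace X] (f : X → X) (x : X) (ε : ℝ) : Set ℕ :=
  {i : ℕ | dist x (f^[i] x) ≤ ε}

/-- `R(f,𝓕)`: the set of `𝓕`-recurrent points. -/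
def FRecurrent {X : Type*} [MetricSpace X] (f : X → X) (F : Set (Set ℕ)) : Set X :=
  {x | ∀ ε : ℝ, 0 < ε → retTimes f x ε ∈ F}

/-- The dual family `𝓕*`. -/
def dualFamily (F : Set (Set ℕ)) : Set (Set ℕ) :=
  {A | ∀ B ∈ F, (A ∩ B).Nonempty}

/-- `Δ(A)`, the difference set of `A`. -/
def deltaSet (A : Set ℕ) : Set ℕ :=
  {i | ∃ j ∈ A, ∃ k ∈ A, j ≤ k ∧ i = k - j}

/-- `Δ(𝓕)`. -/
def deltaFamily (F : Set (Set ℕ)) : Set (Set ℕ) :=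
  {B | ∃ A ∈ F, 0 ∈ A ∧ deltaSet A ⊆ B}

/-- `𝓕`-transitivity: `N(U,V) ∈ 𝓕` for all nonempty open `U, V`. -/
def FTransitive {X : Type*} [TopologicalSpace X] (f : X → X) (F : Set (Set ℕ)) : Prop :=
  ∀ U V : Set X, IsOpen U → IsOpen V → U.Nonempty → V.Nonempty →
    {i : ℕ | ∃ x ∈ U, f^[i] x ∈ V} ∈ F


/-- If the forward orbits of `x` and `y` stay `ε`-close, the triangle inequality puts `V_ε^s(x)`
inside `V_{2ε}^s(y)`. Compactness bounds the distances, so the real-valued limsups are genuine. -/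
lemma Vs_subset_two_mul {X : Type*} [MetricSpace X] [CompactSpace X] {f : X → X} {x y : X} {ε : ℝ}
    (hxy : ∀ i : ℕ, dist (f^[i] x) (f^[i] y) ≤ ε) : Vs f x ε ⊆ Vs f y (2 * ε) := by
  intro w hw
  have hbdd : IsBoundedUnder (· ≤ ·) atTop (fun i : ℕ => dist (f^[i] x) (f^[i] w)) :=
    isBoundedUnder_of ⟨Metric.diam (Set.univ : Set X), fun i =>
      Metric.dist_le_diam_of_mem isCompact_univ.isBounded (Set.mem_univ _) (Set.mem_univ _)⟩
  change limsup (fun i : ℕ => dist (f^[i] y) (f^[i] w)) atTop ≤ 2 * ε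
  refine le_of_forall_pos_le_add fun η hη => ?_
  have hlt : limsup (fun i : ℕ => dist (f^[i] x) (f^[i] w)) atTop < ε + η :=
    lt_of_le_of_lt hw (by linarith)
  refine limsup_le_of_le (isCoboundedUnder_le_of_le atTop (x := 0) fun i => dist_nonneg) ?_
  filter_upwards [eventually_lt_of_limsup_lt hlt hbdd] with i hi
  have htri := dist_triangle_left (f^[i] y) (f^[i] w) (f^[i] x)
  linarith [hxy i]

/-- Lemma 2.2: with `f|_Λ` minimal and equicontinuous and `Γ` a countable
dense subset of `Λ`, if `X = ⋃_{x∈Λ} closure (V_ε^s(x))`, then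
`X = ⋃_{x∈Γ} closure (V_{2ε}^s(x))`. -/
theorem union_closure_countable {X : Type*} [MetricSpace X] [CompactSpace X]
    (f : X → X) (hf : Continuous f) (Λ : Set X)
    (hclosed : IsClosed Λ) (hinv : Set.MapsTo f Λ Λ)
    (hmin : MinimalOn f Λ) (heq : EquicontOnSet f Λ)
    (Γ : Set X) (hΓsub : Γ ⊆ Λ) (hΓcount : Γ.Countable) (hΓdense : Λ ⊆ closure Γ) :
    ∀ ε : ℝ, 0 < ε → (⋃ x ∈ Λ, closure (Vs f x ε)) = Set.univ →
      (⋃ x ∈ Γ, closure (Vs f x (2 * ε))) = Set.univ := by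
  intro ε hε hX
  obtain ⟨δ, hδ, hequi⟩ := heq ε hε
  refine Set.eq_univ_of_forall fun z => ?_
  obtain ⟨x, hx, hz⟩ := Set.mem_iUnion₂.1 (hX ▸ Set.mem_univ z)
  obtain ⟨y, hy, hxy⟩ := Metric.mem_closure_iff.1 (hΓdense hx) δ hδ
  exact Set.mem_iUnion₂.2
    ⟨y, hy, closure_mono (Vs_subset_two_mul (hequi x hx y (hΓsub hy) hxy.le)) hz⟩
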